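/- Let ι be a finite nonempty index set and for each k ∈ ι let R_k be a finite nontrivial commutative local principal ideal ring, and let R = ∏_{k ∈ ι} R_k be the product ring. Then the group of affine permutations of R contains a cross-commuting nonabelian square if and only if there exist distinct indices i ≠ j in ι such that the cardinality of R_i is greater than 2 and the cardinality of R_j is greater than 2 (equivalently, at least two of the factors R_k are not isomorphic to the field with two elements). -/

import Mathlib

/-- Two self-maps of a type commute under composition. -/
def MapsCommute {α : Type*} (f g : α → α) : Prop :=
  f ∘ g = g ∘ f

/-- `f : R → R` is an affine permutation: `x ↦ a·x + b` with `a` a unit of `R`. -/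
def IsAffinePerm {R : Type*} [CommRing R] (f : R → R) : Prop :=
  ∃ a : Rˣ, ∃ b : R, ∀ x, f x = (a : R) * x + b

/-- A cross-commuting nonabelian square exists in the affine permutation group of `R`. -/
def HasCrossCommutingNonabelianSquare (R : Type*) [CommRing R] : Prop :=
  ∃ F₀ F₁ G₀ G₁ : R → R,
    IsAffinePerm F₀ ∧ IsAffinePerm F₁ ∧ IsAffinePerm G₀ ∧ IsAffinePerm G₁ ∧
    MapsCommute F₀ G₀ ∧ MapsCommute F₀ G₁ ∧ MapsCommute F₁ G₀ ∧ MapsCommute F₁ G₁ ∧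
    ¬ MapsCommute F₀ F₁ ∧ ¬ MapsCommute G₀ G₁

/-!
Attach to the affine permutation `x ↦ a * x + b` the vector `(a - 1, b)`. Two affine permutations
commute exactly when the determinant of their vectors vanishes, so a square consists of two pairs
`p, p'` and `q, q'` of vectors with vanishing cross determinants and nonzero inner ones. If
divisibility is total, one of the four coordinates of `p, p'` divides the other three; by symmetry
it is the first coordinate `u` of `p`, so that `p = u • (1, β)` and the determinant of `p, p'` is
`u * w` with `u ∣ w`. Every `q` orthogonal to `p` and `p'` has the form `v • (1, β) + (0, s)` with
`w * v = 0` and `u * s = 0`, and totality of divisibility makes the product of any such `v` and `s`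
vanish when `u * w ≠ 0`. Hence in a product the two noncommuting pairs are detected in different
factors, and a factor that detects one has a unit other than `1`, hence more than two elements.
Conversely, homotheties and translations supported on two such factors form a square.
-/

section Divisibility

theorem exists_forall_dvd {M ι : Type*} [Monoid M] [PreValuationRing M] [Finite ι] [Nonempty ι]
    (f : ι → M) : ∃ i, ∀ j, f i ∣ f j := by
  have : IsTrans ι fun i j => f j ∣ f i := ⟨fun _ _ _ hij hjk => hjk.trans hij⟩
  have directed : Directed (fun i j => f j ∣ f i) id := fun i j =>
    (ValuationRing.dvd_total (f i) (f j)).elim (fun h => ⟨i, dvd_rfl, h⟩) fun h => ⟨j, h, dvd_rfl⟩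
  exact directed.finite_le id

theorem mul_eq_zero_of_mul_ne_zero {M : Type*} [CommMonoidWithZero M] [PreValuationRing M]
    {u w v s : M} (huw : u * w ≠ 0) (hwv : w * v = 0) (hus : u * s = 0) : v * s = 0 := by
  rcases ValuationRing.dvd_total w s with ⟨t, rfl⟩ | ⟨t, rfl⟩
  · rw [← mul_assoc, mul_comm v, hwv, zero_mul]
  · exact absurd (by rw [← mul_assoc, hus, zero_mul]) huw

theorem preValuationRing_of_isLocalRing_of_isBezout {R : Type*} [CommRing R] [IsLocalRing R]
    [IsBezout R] : PreValuationRing R := by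
  refine PreValuationRing.iff_dvd_total.2 ⟨fun a b => ?_⟩
  obtain ⟨x, y, hxy⟩ := IsBezout.gcd_eq_sum a b
  obtain ⟨a', ha⟩ := IsBezout.gcd_dvd_left a b
  obtain ⟨b', hb⟩ := IsBezout.gcd_dvd_right a b
  set g := IsBezout.gcd a b
  rcases IsLocalRing.isUnit_or_isUnit_one_sub_self (x * a' + y * b') with h | h
  · rw [ha, hb]
    rcases IsLocalRing.isUnit_or_isUnit_of_isUnit_add h with h | h
    · exact .inl (mul_dvd_mul_left g (isUnit_of_mul_isUnit_right h).dvd)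
    · exact .inr (mul_dvd_mul_left g (isUnit_of_mul_isUnit_right h).dvd)
  · have hg : g = 0 := h.mul_left_eq_zero.1 (by linear_combination x * ha + y * hb - hxy)
    exact .inr (by simp [ha, hg])

end Divisibility

section Units

theorem two_lt_card_of_nontrivial_units {M : Type*} [MonoidWithZero M] [Nontrivial Mˣ] :
    2 < ENat.card M := by
  have : Nontrivial M := Units.val_injective.nontrivial
  obtain ⟨a, ha⟩ := exists_ne (1 : Mˣ)
  have injective : Function.Injective ![(0 : M), 1, a] := by
    simp [Function.Injective, Fin.forall_fin_succ, eq_comm, ha]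
  have three_le : 3 ≤ ENat.card M := by
    simpa using ENat.card_le_card_of_injective injective
  exact lt_of_lt_of_le (by norm_num) three_le

theorem nontrivial_units_of_two_lt_card {R : Type*} [Ring R] [IsLocalRing R]
    (h : 2 < ENat.card R) : Nontrivial Rˣ := by
  obtain ⟨z, hz0, hz1⟩ := ENat.exists_ne_ne_of_three_le (Order.add_one_le_of_lt h) (0 : R) 1
  rcases IsLocalRing.isUnit_or_isUnit_of_add_one (add_sub_cancel z 1) with ⟨a, ha⟩ | ⟨a, ha⟩
  · exact ⟨a, 1, fun h => hz1 (by simp [← ha, h])⟩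
  · exact ⟨a, 1, fun h => hz0 (by simpa [h] using ha.symm)⟩

end Units

section Wedge

variable {R : Type*} [CommRing R]

/-- The determinant of two vectors of `R × R`, i.e. the standard symplectic form. Two affine
permutations commute when it vanishes on their `displacement`s. -/
def wedge (p q : R × R) : R :=
  p.1 * q.2 - p.2 * q.1

theorem neg_wedge (p q : R × R) : -wedge p q = wedge q p := by
  simp only [wedge]
  ring

theorem wedge_swap_swap (p q : R × R) : wedge p.swap q.swap = -wedge p q := by
  simp only [wedge, Prod.fst_swap, Prod.snd_swap]
  ring

theorem wedge_eq_zero_of_fst_dvd [PreValuationRing R] {p p' q q' : R × R}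
    (h₂ : p.1 ∣ p.2) (h₁' : p.1 ∣ p'.1) (h₂' : p.1 ∣ p'.2)
    (hpq : wedge p q = 0) (hpq' : wedge p q' = 0) (hp'q : wedge p' q = 0)
    (hp'q' : wedge p' q' = 0) (hpp' : wedge p p' ≠ 0) : wedge q q' = 0 := by
  obtain ⟨u, b⟩ := p
  obtain ⟨u', b'⟩ := p'
  obtain ⟨v, d⟩ := q
  obtain ⟨v', d'⟩ := q'
  simp only [wedge] at *
  obtain ⟨β, rfl⟩ := h₂
  obtain ⟨μ, rfl⟩ := h₁'
  obtain ⟨ν, rfl⟩ := h₂'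
  have huw : u * (u * (ν - β * μ)) ≠ 0 := fun h => hpp' (by linear_combination h)
  have hwv : u * (ν - β * μ) * v = 0 := by linear_combination μ * hpq - hp'q
  have hwv' : u * (ν - β * μ) * v' = 0 := by linear_combination μ * hpq' - hp'q'
  have hus : u * (d - β * v) = 0 := by linear_combination hpq
  have hus' : u * (d' - β * v') = 0 := by linear_combination hpq'
  linear_combination mul_eq_zero_of_mul_ne_zero huw hwv hus' -
    mul_eq_zero_of_mul_ne_zero huw hwv' hus

theorem wedge_eq_zero_of_dvd [PreValuationRing R] {p p' q q' : R × R}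
    (h : p.1 ∣ p.2 ∧ p.1 ∣ p'.1 ∧ p.1 ∣ p'.2 ∨ p.2 ∣ p.1 ∧ p.2 ∣ p'.1 ∧ p.2 ∣ p'.2)
    (hpq : wedge p q = 0) (hpq' : wedge p q' = 0) (hp'q : wedge p' q = 0)
    (hp'q' : wedge p' q' = 0) (hpp' : wedge p p' ≠ 0) : wedge q q' = 0 := by
  rcases h with ⟨h₂, h₁', h₂'⟩ | ⟨h₁, h₁', h₂'⟩
  · exact wedge_eq_zero_of_fst_dvd h₂ h₁' h₂' hpq hpq' hp'q hp'q' hpp'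
  · rw [← neg_eq_zero, ← wedge_swap_swap] at hpq hpq' hp'q hp'q' ⊢
    rw [← neg_ne_zero, ← wedge_swap_swap] at hpp'
    exact wedge_eq_zero_of_fst_dvd h₁ h₂' h₁' hpq hpq' hp'q hp'q' hpp'

theorem wedge_eq_zero_of_wedge_ne_zero [PreValuationRing R] {p p' q q' : R × R}
    (hpq : wedge p q = 0) (hpq' : wedge p q' = 0) (hp'q : wedge p' q = 0)
    (hp'q' : wedge p' q' = 0) (hpp' : wedge p p' ≠ 0) : wedge q q' = 0 := by
  obtain ⟨i, hi⟩ := exists_forall_dvd ![p.1, p.2, p'.1, p'.2]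
  have hp'p : wedge p' p ≠ 0 := by rwa [← neg_wedge, neg_ne_zero]
  fin_cases i
  · exact wedge_eq_zero_of_dvd (.inl ⟨hi 1, hi 2, hi 3⟩) hpq hpq' hp'q hp'q' hpp'
  · exact wedge_eq_zero_of_dvd (.inr ⟨hi 0, hi 2, hi 3⟩) hpq hpq' hp'q hp'q' hpp'
  · exact wedge_eq_zero_of_dvd (.inl ⟨hi 3, hi 0, hi 1⟩) hp'q hp'q' hpq hpq' hp'p
  · exact wedge_eq_zero_of_dvd (.inr ⟨hi 2, hi 0, hi 1⟩) hp'q hp'q' hpq hpq' hp'p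

end Wedge

section Displacement

variable {R S : Type*} [CommRing R] [CommRing S]

/-- The affine permutation `x ↦ a * x + b` given by its coefficients `(a, b)`. Every
`f` with `IsAffinePerm f` is of this form. -/
def affinePerm (p : Rˣ × R) (x : R) : R :=
  p.1 * x + p.2

/-- The coefficients of `affinePerm p - id`, as a vector `(a - 1, b)` of `R × R`. Commutation of
affine permutations depends on their displacements only, through `wedge`. -/
def displacement (p : Rˣ × R) : R × R :=
  (p.1 - 1, p.2)

theorem isAffinePerm_iff_exists_affinePerm {f : R → R} :
    IsAffinePerm f ↔ ∃ p, affinePerm p = f := by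
  simp only [IsAffinePerm, Prod.exists, funext_iff, affinePerm, eq_comm]

theorem mapsCommute_affinePerm_iff {p q : Rˣ × R} :
    MapsCommute (affinePerm p) (affinePerm q) ↔ wedge (displacement p) (displacement q) = 0 := by
  simp only [MapsCommute, funext_iff, Function.comp_apply, affinePerm, wedge, displacement]
  exact ⟨fun h => by linear_combination h 0, fun h x => by linear_combination h⟩

theorem hasCrossCommutingNonabelianSquare_iff_wedge :
    HasCrossCommutingNonabelianSquare R ↔ ∃ p₀ p₁ q₀ q₁ : Rˣ × R,
      wedge (displacement p₀) (displacement q₀) = 0 ∧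
      wedge (displacement p₀) (displacement q₁) = 0 ∧
      wedge (displacement p₁) (displacement q₀) = 0 ∧
      wedge (displacement p₁) (displacement q₁) = 0 ∧
      wedge (displacement p₀) (displacement p₁) ≠ 0 ∧
      wedge (displacement q₀) (displacement q₁) ≠ 0 := by
  simp only [HasCrossCommutingNonabelianSquare, isAffinePerm_iff_exists_affinePerm,
    ← mapsCommute_affinePerm_iff, ne_eq]
  constructor
  · rintro ⟨_, _, _, _, ⟨p₀, rfl⟩, ⟨p₁, rfl⟩, ⟨q₀, rfl⟩, ⟨q₁, rfl⟩, h⟩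
    exact ⟨p₀, p₁, q₀, q₁, h⟩
  · rintro ⟨p₀, p₁, q₀, q₁, h⟩
    exact ⟨_, _, _, _, ⟨p₀, rfl⟩, ⟨p₁, rfl⟩, ⟨q₀, rfl⟩, ⟨q₁, rfl⟩, h⟩

theorem nontrivial_units_of_wedge_displacement_ne_zero {p q : Rˣ × R}
    (h : wedge (displacement p) (displacement q) ≠ 0) : Nontrivial Rˣ := by
  by_contra! hR
  exact h (by simp [wedge, displacement, Subsingleton.elim _ (1 : Rˣ)])

theorem wedge_displacement_map (f : R →+* S) (p q : Rˣ × R) :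
    wedge (displacement (p.map (Units.map f) f)) (displacement (q.map (Units.map f) f)) =
      f (wedge (displacement p) (displacement q)) := by
  simp [wedge, displacement]

theorem hasCrossCommutingNonabelianSquare_of_units (a c : Rˣ) (b d : R)
    (hab : (a - 1) * b ≠ 0) (hcd : (c - 1) * d ≠ 0)
    (had : (a - 1) * d = 0) (hcb : (c - 1) * b = 0) :
    HasCrossCommutingNonabelianSquare R :=
  hasCrossCommutingNonabelianSquare_iff_wedge.2 ⟨(a, 0), (1, b), (c, 0), (1, d), by
    simp [wedge, displacement, hab, hcd, had, mul_comm b, hcb]⟩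

end Displacement

section Pi

variable {ι : Type*} {R : ι → Type*} [∀ k, CommRing (R k)]

theorem hasCrossCommutingNonabelianSquare_pi_of_nontrivial_units {i j : ι} (hij : i ≠ j)
    [Nontrivial (R i)ˣ] [Nontrivial (R j)ˣ] :
    HasCrossCommutingNonabelianSquare (∀ k, R k) := by
  classical
  obtain ⟨a, ha⟩ := exists_ne (1 : (R i)ˣ)
  obtain ⟨c, hc⟩ := exists_ne (1 : (R j)ˣ)
  refine hasCrossCommutingNonabelianSquare_of_units
    (Units.map (MonoidHom.mulSingle R i) a) (Units.map (MonoidHom.mulSingle R j) c)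
    (Pi.single i 1) (Pi.single j 1) ?_ ?_ ?_ ?_
  all_goals simp [← Pi.single_mul_right, sub_eq_zero, ha, hc, hij, hij.symm]

theorem exists_ne_nontrivial_units_of_hasCrossCommutingNonabelianSquare_pi
    [∀ k, PreValuationRing (R k)] (h : HasCrossCommutingNonabelianSquare (∀ k, R k)) :
    ∃ i j : ι, i ≠ j ∧ Nontrivial (R i)ˣ ∧ Nontrivial (R j)ˣ := by
  obtain ⟨p₀, p₁, q₀, q₁, h₀₀, h₀₁, h₁₀, h₁₁, hp, hq⟩ :=
    hasCrossCommutingNonabelianSquare_iff_wedge.1 h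
  obtain ⟨i, hi : Pi.evalRingHom R i (wedge _ _) ≠ 0⟩ := Function.ne_iff.1 hp
  obtain ⟨j, hj : Pi.evalRingHom R j (wedge _ _) ≠ 0⟩ := Function.ne_iff.1 hq
  rw [← wedge_displacement_map] at hi hj
  refine ⟨i, j, ?_, nontrivial_units_of_wedge_displacement_ne_zero hi,
    nontrivial_units_of_wedge_displacement_ne_zero hj⟩
  rintro rfl
  refine hj (wedge_eq_zero_of_wedge_ne_zero ?_ ?_ ?_ ?_ hi) <;>
    simp only [wedge_displacement_map, map_zero, h₀₀, h₀₁, h₁₀, h₁₁]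

end Pi

theorem pir_classification_card_general {ι : Type*} (R : ι → Type*)
    [∀ k, CommRing (R k)] [∀ k, IsLocalRing (R k)] [∀ k, IsBezout (R k)] :
    HasCrossCommutingNonabelianSquare (∀ k, R k) ↔
      ∃ i j : ι, i ≠ j ∧ 2 < ENat.card (R i) ∧ 2 < ENat.card (R j) := by
  have (k : ι) : PreValuationRing (R k) := preValuationRing_of_isLocalRing_of_isBezout
  constructor
  · intro h
    obtain ⟨i, j, hij, _, _⟩ :=
      exists_ne_nontrivial_units_of_hasCrossCommutingNonabelianSquare_pi h
    exact ⟨i, j, hij, two_lt_card_of_nontrivial_units, two_lt_card_of_nontrivial_units⟩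
  · rintro ⟨i, j, hij, hi, hj⟩
    have := nontrivial_units_of_two_lt_card hi
    have := nontrivial_units_of_two_lt_card hj
    exact hasCrossCommutingNonabelianSquare_pi_of_nontrivial_units hij

/-- **Classification over finite commutative principal ideal rings (cardinality
version).** Let `R = ∏ k, R k` be a finite product of finite nontrivial commutative
local principal ideal rings. The affine group of `R` contains a cross-commuting
nonabelian square if and only if there are two distinct indices `i ≠ j` with
`|R i| > 2` and `|R j| > 2`, i.e. at least two local factors are not `𝔽₂`. -/
theorem pir_classification_card {ι : Type*} [Fintype ι] [Nonempty ι] (R : ι → Type*)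
    [∀ k, CommRing (R k)] [∀ k, Finite (R k)] [∀ k, Nontrivial (R k)]
    [∀ k, IsLocalRing (R k)] [∀ k, IsPrincipalIdealRing (R k)] :
    HasCrossCommutingNonabelianSquare (∀ k, R k) ↔
      ∃ i j : ι, i ≠ j ∧ 2 < Nat.card (R i) ∧ 2 < Nat.card (R j) := by
  simpa [ENat.card_eq_coe_natCard] using pir_classification_card_general R
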